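/- Let S = {(x₁,1), (x₂,−1)} ⊆ ℝ^d × {−1,+1} with d(x₁,x₂) = 2γ*, and let S' = {(x_i + z_i^{(j)}, y_i) : i ∈ {1,2}, j ∈ [N]} where the z_i^{(j)} are i.i.d. uniform on the sphere of radius r in ℝ^d. If N ≥ 16d and r ≥ (8e²√(2d)/π^{3/2})·γ*, then the probability that R_∞(S ∪ S') = ∅ is at least 1 − 2e^{−d/6}. -/

import Mathlib

open scoped RealInnerProductSpace ENNReal Classical
open Metric Set MeasureTheory

noncomputable section

/-- `ℝ^d` with the Euclidean (ℓ²) structure. -/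
abbrev Euc (d : ℕ) := EuclideanSpace ℝ (Fin d)

/-- `X₊`: the set of points of `T` with label `1`. -/
def posPts {d : ℕ} (T : Set (Euc d × ℝ)) : Set (Euc d) := {x | (x, (1 : ℝ)) ∈ T}

/-- `X₋`: the set of points of `T` with label `-1`. -/
def negPts {d : ℕ} (T : Set (Euc d × ℝ)) : Set (Euc d) := {x | (x, (-1 : ℝ)) ∈ T}

/-- All labels in `T` are `±1`, i.e. `T ⊆ ℝ^d × {-1, +1}`. -/
def LabelsPM {d : ℕ} (T : Set (Euc d × ℝ)) : Prop := ∀ p ∈ T, p.2 = 1 ∨ p.2 = -1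

/-- `(w, b)` is a linear separator of the labeled set `T`:
`w ≠ 0` and `y(⟨w,x⟩ + b) ≥ 0` for all `(x,y) ∈ T`. -/
def IsLinSep {d : ℕ} (w : Euc d) (b : ℝ) (T : Set (Euc d × ℝ)) : Prop :=
  w ≠ 0 ∧ ∀ p ∈ T, p.2 * (⟪w, p.1⟫ + b) ≥ 0

/-- The hyperplane `H = {x | ⟨w,x⟩ + b = 0}` associated with `(w, b)`. -/
def hyperplane {d : ℕ} (w : Euc d) (b : ℝ) : Set (Euc d) := {x | ⟪w, x⟫ + b = 0}

/-- The margin `γ_{(w,b)}(S)`: infimum over `(x,y) ∈ S` of the distance from `x`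
to the hyperplane of `(w,b)`. -/
def linMargin {d : ℕ} (S : Set (Euc d × ℝ)) (w : Euc d) (b : ℝ) : ℝ :=
  ⨅ p : S, Metric.infDist (p : Euc d × ℝ).1 (hyperplane w b)

/-- `γ` is the max-margin of `S`: attained by some linear separator of `S`, and an upper
bound on the margin of every linear separator of `S`. -/
def IsMaxMargin {d : ℕ} (S : Set (Euc d × ℝ)) (γ : ℝ) : Prop :=
  (∃ w b, IsLinSep w b S ∧ linMargin S w b = γ) ∧
    ∀ w b, IsLinSep w b S → linMargin S w b ≤ γ

/-- The worst-case margin `α(S,S')` (an extended real): the infimum over all linear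
separators of `S ∪ S'` of their margin on `S`, or `-∞` if no separator exists. -/
def alpha {d : ℕ} (S S' : Set (Euc d × ℝ)) : EReal :=
  if ∃ w b, IsLinSep w b (S ∪ S') then
    sInf {m : EReal | ∃ w b, IsLinSep w b (S ∪ S') ∧ m = ((linMargin S w b : ℝ) : EReal)}
  else ⊥

/-- `S_r`: the set of labeled points obtained by moving a point of `S` by distance at
most `r`, keeping its label; i.e. `((X₊)_r × {1}) ∪ ((X₋)_r × {-1})`. -/
def ballAug {d : ℕ} (S : Set (Euc d × ℝ)) (r : ℝ) : Set (Euc d × ℝ) :=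
  {p | (p.2 = 1 ∧ Metric.infDist p.1 (posPts S) ≤ r) ∨
       (p.2 = -1 ∧ Metric.infDist p.1 (negPts S) ≤ r)}

/-- A `{±1}`-valued classifier. -/
def IsClassifier {d : ℕ} (f : Euc d → ℝ) : Prop := ∀ x, f x = 1 ∨ f x = -1

/-- `f` separates the labeled set `T`: `f x = y` for all `(x,y) ∈ T`. -/
def Separates {d : ℕ} (f : Euc d → ℝ) (T : Set (Euc d × ℝ)) : Prop :=
  ∀ p ∈ T, f p.1 = p.2

/-- The circumradius of `A`: the radius of the smallest closed ball containing `A`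
(as an extended nonnegative real). -/
def circumradius {d : ℕ} (A : Set (Euc d)) : ℝ≥0∞ :=
  ⨅ c : Euc d, ⨆ x ∈ A, edist c x

/-- `f` is `ε`-respectful of `T`: `f = 1` on the convex hull of any subset of `X₊(T)` of
circumradius at most `ε`, and `f = -1` on the convex hull of any subset of `X₋(T)` of
circumradius at most `ε`. (Taking `ε = ⊤` gives respectful classifiers.) -/
def RespectfulOf {d : ℕ} (ε : ℝ≥0∞) (f : Euc d → ℝ) (T : Set (Euc d × ℝ)) : Prop :=
  (∀ A ⊆ posPts T, circumradius A ≤ ε → ∀ x ∈ convexHull ℝ A, f x = 1) ∧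
  (∀ B ⊆ negPts T, circumradius B ≤ ε → ∀ x ∈ convexHull ℝ B, f x = -1)

/-- `R_ε(T)`, the set of `ε`-respectful classifiers of `T`. -/
def respectfulSet {d : ℕ} (ε : ℝ≥0∞) (T : Set (Euc d × ℝ)) : Set (Euc d → ℝ) :=
  {f | IsClassifier f ∧ RespectfulOf ε f T}

/-- The margin `γ_f(S)` of a classifier `f` on `S`:
`min_{(x,y) ∈ S} d(x, f⁻¹(-y))`. -/
def clsMargin {d : ℕ} (f : Euc d → ℝ) (S : Set (Euc d × ℝ)) : ℝ :=
  ⨅ p : S, Metric.infDist (p : Euc d × ℝ).1 (f ⁻¹' {-(p : Euc d × ℝ).2})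

/-- `γ_f(S,S')`: the margin of `f` on `S` if `f` separates `S ∪ S'`, and `-∞` otherwise. -/
def clsMarginAug {d : ℕ} (f : Euc d → ℝ) (S S' : Set (Euc d × ℝ)) : EReal :=
  if Separates f (S ∪ S') then ((clsMargin f S : ℝ) : EReal) else ⊥

/-- The distance `d(P, Q) = inf {d(a,b) | a ∈ P, b ∈ Q}` between two sets,
as an extended nonnegative real. -/
def setSepDist {d : ℕ} (P Q : Set (Euc d)) : ℝ≥0∞ :=
  ⨅ a ∈ P, EMetric.infEdist a Q

/-- The uniform (rotation-invariant) probability measure on the sphere of radius `r`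
centered at the origin in `ℝ^d`, obtained by normalizing the surface measure induced by
Lebesgue measure on the unit sphere and pushing forward by scaling by `r`. -/
def uniformSphere (d : ℕ) (r : ℝ) : Measure (Euc d) :=
  (((volume : Measure (Euc d)).toSphere) Set.univ)⁻¹ •
    ((((volume : Measure (Euc d)).toSphere).map (Subtype.val)).map (fun x => r • x))

end

/-
Write `v = x₂ - x₁`. If `x₂` lies in the convex hull of the points `x₁ + z j`, that is, if `v` lies
in the convex hull of the `z j`, then a respectful classifier would take both values `1` and `-1` at
`x₂`. Otherwise let `p` be the point of this hull nearest to `v`. By Carathéodory's theorem in the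
supporting hyperplane at `p`, some set `J` of at most `d` indices already determines `p`, and all
`z j` fall into the half-space `{x | ⟪v - p, x⟫ ≤ ⟪v - p, v⟫}`. Its boundary has distance at most
`‖v‖` from the origin, which is small compared with `r / √d`, so it has probability at most `3 / 4`.
The `z j` with `j ∉ J` are independent of it, so a union bound over `J` applies; weighting `J` by
`12 ^ (d - #J) ≥ 1` bounds the sum by `12 ^ d * (12⁻¹ + 3 / 4) ^ N ≤ exp (-d / 6)`.
-/

open scoped Pointwise
open Module Finset

section SphericalCap

variable {E : Type*} [NormedAddCommGroup E] [InnerProductSpace ℝ E] {e : E} {t : ℝ}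

lemma norm_add_mul_inner_smul_sq (he : ‖e‖ = 1) (k : ℝ) (x : E) :
    ‖x + (k * ⟪e, x⟫) • e‖ ^ 2 = ‖x‖ ^ 2 + ((1 + k) ^ 2 - 1) * ⟪e, x⟫ ^ 2 := by
  rw [norm_add_sq_real, inner_smul_right, real_inner_comm, norm_smul, he, Real.norm_eq_abs,
    mul_one, sq_abs]
  ring

variable [FiniteDimensional ℝ E] [MeasurableSpace E] [BorelSpace E]
  (μ : Measure E) [μ.IsAddHaarMeasure]

/- Stretching the slab by the factor `3` in the direction `e` triples its volume, and the image
still lies in a ball of radius `1 + 4 t²`. -/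
lemma three_mul_measureReal_ball_inter_slab_le (he : ‖e‖ = 1) (t : ℝ) :
    3 * μ.real (ball 0 1 ∩ {x | |⟪e, x⟫| ≤ t}) ≤
      (1 + 4 * t ^ 2) ^ finrank ℝ E * μ.real (ball 0 1) := by
  let stretch : E →ₗ[ℝ] E := LinearMap.transvection (innerₛₗ ℝ e) ((2 : ℝ) • e)
  have stretch_apply (x : E) : stretch x = x + (2 * ⟪e, x⟫) • e := by
    simp [stretch, LinearMap.transvection.apply, smul_smul, mul_comm]
  have det_stretch : LinearMap.det stretch = 3 := by
    simp only [stretch, LinearMap.transvection.det, innerₛₗ_apply_apply, inner_smul_right,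
      real_inner_self_eq_norm_sq, he]
    norm_num
  have image_subset :
      stretch '' (ball 0 1 ∩ {x | |⟪e, x⟫| ≤ t}) ⊆ ball 0 (1 + 4 * t ^ 2) := by
    rintro _ ⟨x, ⟨hx, hxt⟩, rfl⟩
    rw [mem_ball_zero_iff] at hx ⊢
    have hxt_sq : ⟪e, x⟫ ^ 2 ≤ t ^ 2 := sq_le_sq' (abs_le.1 hxt).1 (abs_le.1 hxt).2
    have hx_sq : ‖x‖ ^ 2 < 1 := pow_lt_one₀ (norm_nonneg x) hx two_ne_zero
    refine lt_of_pow_lt_pow_left₀ 2 (by positivity) ?_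
    rw [stretch_apply, norm_add_mul_inner_smul_sq he]
    nlinarith [sq_nonneg (t ^ 2)]
  calc 3 * μ.real (ball 0 1 ∩ {x | |⟪e, x⟫| ≤ t})
      = μ.real (stretch '' (ball 0 1 ∩ {x | |⟪e, x⟫| ≤ t})) := by
        simp [measureReal_def, Measure.addHaar_image_linearMap, det_stretch]
    _ ≤ μ.real (ball 0 (1 + 4 * t ^ 2)) := measureReal_mono image_subset measure_ball_lt_top.ne
    _ = (1 + 4 * t ^ 2) ^ finrank ℝ E * μ.real (ball 0 1) := by
        rw [measureReal_def, Measure.addHaar_ball_of_pos _ _ (by positivity), ENNReal.toReal_mul,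
          ENNReal.toReal_ofReal (by positivity), ← measureReal_def]

lemma one_add_pow_le_three_halves {n : ℕ} {s : ℝ} (hs : 0 ≤ s) (hns : 9 * n * s ≤ 2) :
    (1 + s) ^ n ≤ 3 / 2 :=
  calc (1 + s) ^ n ≤ Real.exp s ^ n := by
        gcongr
        linarith [Real.add_one_le_exp s]
    _ = Real.exp (n * s) := (Real.exp_nat_mul s n).symm
    _ ≤ Real.exp (2 / 9) := Real.exp_le_exp.2 (by linarith)
    _ ≤ 1 / (1 - 2 / 9) := Real.exp_bound_div_one_sub_of_interval (by norm_num) (by norm_num)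
    _ ≤ 3 / 2 := by norm_num

lemma two_mul_measureReal_ball_inter_slab_le (he : ‖e‖ = 1) (ht : 18 * finrank ℝ E * t ^ 2 ≤ 1) :
    2 * μ.real (ball 0 1 ∩ {x | |⟪e, x⟫| ≤ t}) ≤ μ.real (ball 0 1) := by
  have hpow : (1 + 4 * t ^ 2) ^ finrank ℝ E ≤ 3 / 2 :=
    one_add_pow_le_three_halves (by positivity) (by linarith)
  have := (three_mul_measureReal_ball_inter_slab_le μ he t).trans
    (mul_le_mul_of_nonneg_right hpow measureReal_nonneg)
  linarith

lemma measureReal_ball_inter_halfSpace_le (he : ‖e‖ = 1)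
    (ht : 18 * finrank ℝ E * t ^ 2 ≤ 1) :
    μ.real (ball 0 1 ∩ {x | ⟪e, x⟫ ≤ t}) ≤ 3 / 4 * μ.real (ball 0 1) := by
  set lower := ball (0 : E) 1 ∩ {x | ⟪e, x⟫ ≤ t}
  set upper := ball (0 : E) 1 \ {x | ⟪e, x⟫ ≤ t} with upper_def
  set slab := ball (0 : E) 1 ∩ {x | |⟪e, x⟫| ≤ t}
  have ball_eq : μ.real lower + μ.real upper = μ.real (ball 0 1) :=
    measureReal_inter_add_sdiff₀ (measurableSet_le (by fun_prop) (by fun_prop)).nullMeasurableSet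
      measure_ball_lt_top.ne
  have lower_subset : lower ⊆ slab ∪ -upper := by
    rintro x ⟨hx, hxt : ⟪e, x⟫ ≤ t⟩
    rcases le_or_gt (-t) ⟪e, x⟫ with h | h
    · exact .inl ⟨hx, abs_le.2 ⟨h, hxt⟩⟩
    · right
      simpa [upper_def, lt_neg] using And.intro (mem_ball_zero_iff.1 hx) h
  have lower_le : μ.real lower ≤ μ.real slab + μ.real upper := by
    have upper_neg : μ.real (-upper) = μ.real upper := by simp [measureReal_def]
    rw [← upper_neg]
    refine (measureReal_mono lower_subset ?_).trans (measureReal_union_le _ _)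
    exact ((isBounded_ball.subset inter_subset_left).union
      (isBounded_ball.subset sdiff_subset).neg).measure_lt_top.ne
  linarith [two_mul_measureReal_ball_inter_slab_le μ he ht]

lemma toSphere_halfSpace_le (he : ‖e‖ = 1) (ht₀ : 0 ≤ t) (ht : 18 * finrank ℝ E * t ^ 2 ≤ 1) :
    μ.toSphere {u | ⟪e, u⟫ ≤ t} ≤ ENNReal.ofReal (3 / 4) * μ.toSphere univ := by
  have cone_subset : Ioo (0 : ℝ) 1 • ((↑) '' {u : sphere (0 : E) 1 | ⟪e, (u : E)⟫ ≤ t}) ⊆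
      ball 0 1 ∩ {x | ⟪e, x⟫ ≤ t} := by
    rintro _ ⟨s, ⟨hs₀, hs₁⟩, _, ⟨u, hu : ⟪e, (u : E)⟫ ≤ t, rfl⟩, rfl⟩
    constructor
    · simpa [norm_smul, abs_of_pos hs₀] using hs₁
    · have : s * ⟪e, (u : E)⟫ ≤ t := by nlinarith
      simpa [inner_smul_right] using this
  rw [μ.toSphere_apply' (measurableSet_le (by fun_prop) (by fun_prop)), μ.toSphere_apply_univ,
    mul_left_comm]
  gcongr
  calc μ (Ioo (0 : ℝ) 1 • ((↑) '' {u : sphere (0 : E) 1 | ⟪e, (u : E)⟫ ≤ t}))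
      ≤ μ (ball 0 1 ∩ {x | ⟪e, x⟫ ≤ t}) := measure_mono cone_subset
    _ = ENNReal.ofReal (μ.real (ball 0 1 ∩ {x | ⟪e, x⟫ ≤ t})) :=
        (ofReal_measureReal (isBounded_ball.subset inter_subset_left).measure_lt_top.ne).symm
    _ ≤ ENNReal.ofReal (3 / 4 * μ.real (ball 0 1)) :=
        ENNReal.ofReal_le_ofReal (measureReal_ball_inter_halfSpace_le μ he ht)
    _ = ENNReal.ofReal (3 / 4) * μ (ball 0 1) := by
        rw [ENNReal.ofReal_mul (by norm_num), ofReal_measureReal measure_ball_lt_top.ne]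

end SphericalCap

section UniformSphere

variable {d : ℕ} {r : ℝ}

lemma uniformSphere_apply (d : ℕ) (r : ℝ) {s : Set (Euc d)} (hs : MeasurableSet s) :
    uniformSphere d r s = ((volume : Measure (Euc d)).toSphere univ)⁻¹ *
      (volume : Measure (Euc d)).toSphere {u : sphere (0 : Euc d) 1 | r • (u : Euc d) ∈ s} := by
  rw [uniformSphere, Measure.smul_apply, smul_eq_mul, Measure.map_apply (by fun_prop) hs,
    Measure.map_apply (by fun_prop) (measurable_const_smul r hs)]
  rfl

lemma isProbabilityMeasure_uniformSphere (hd : 0 < d) (r : ℝ) :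
    IsProbabilityMeasure (uniformSphere d r) := by
  have : Nonempty (Fin d) := ⟨⟨0, hd⟩⟩
  refine ⟨?_⟩
  rw [uniformSphere_apply d r .univ]
  exact ENNReal.inv_mul_cancel (Measure.measure_univ_ne_zero.2 (Measure.toSphere_ne_zero _))
    (measure_ne_top _ _)

lemma uniformSphere_halfSpace_le (hd : 0 < d) (hr : 0 < r) {v w : Euc d}
    (hv : 18 * d * ‖v‖ ^ 2 ≤ r ^ 2) (hw : w ≠ 0) :
    uniformSphere d r {x | ⟪w, x⟫ ≤ ⟪w, v⟫} ≤ ENNReal.ofReal (3 / 4) := by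
  have : Nonempty (Fin d) := ⟨⟨0, hd⟩⟩
  have hw₀ : 0 < ‖w‖ := norm_pos_iff.2 hw
  have unit_normal : ‖‖w‖⁻¹ • w‖ = 1 := norm_smul_inv_norm hw
  have small_height : 18 * finrank ℝ (Euc d) * (‖v‖ / r) ^ 2 ≤ 1 := by
    rw [finrank_euclideanSpace_fin, div_pow, ← mul_div_assoc]
    exact div_le_one_of_le₀ hv (by positivity)
  have halfSpace_subset : {u : sphere (0 : Euc d) 1 | ⟪w, r • (u : Euc d)⟫ ≤ ⟪w, v⟫} ⊆
      {u | ⟪‖w‖⁻¹ • w, (u : Euc d)⟫ ≤ ‖v‖ / r} := by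
    intro u (hu : ⟪w, r • (u : Euc d)⟫ ≤ ⟪w, v⟫)
    rw [inner_smul_right] at hu
    change ⟪‖w‖⁻¹ • w, (u : Euc d)⟫ ≤ ‖v‖ / r
    rw [real_inner_smul_left, inv_mul_le_iff₀ hw₀, mul_div_assoc', le_div_iff₀ hr, mul_comm]
    exact hu.trans (real_inner_le_norm w v)
  rw [uniformSphere_apply d r (measurableSet_le (by fun_prop) (by fun_prop)),
    ENNReal.inv_mul_le_iff (Measure.measure_univ_ne_zero.2 (Measure.toSphere_ne_zero _))
      (measure_ne_top _ _), mul_comm]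
  exact (measure_mono halfSpace_subset).trans
    (toSphere_halfSpace_le volume unit_normal (by positivity) small_height)

end UniformSphere

section ConvexHull

variable {E : Type*} [NormedAddCommGroup E] [InnerProductSpace ℝ E] {s : Set E} {v w p q : E}

lemma inner_sub_le_zero_of_mem_convexHull (h : ∀ x ∈ s, ⟪w, x - p⟫ ≤ 0)
    (hq : q ∈ convexHull ℝ s) : ⟪w, q - p⟫ ≤ 0 := by
  simp only [inner_sub_right, sub_nonpos] at h ⊢
  exact convexHull_min (fun x hx => h x hx) (convex_halfSpace_le (innerₛₗ ℝ w).isLinear _) hq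

lemma eq_of_inner_le_zero_of_mem_convexHull (hp : p ∈ convexHull ℝ s) (hq : q ∈ convexHull ℝ s)
    (hvp : ∀ x ∈ s, ⟪v - p, x - p⟫ ≤ 0) (hvq : ∀ x ∈ s, ⟪v - q, x - q⟫ ≤ 0) : p = q := by
  have hpq := inner_sub_le_zero_of_mem_convexHull hvp hq
  have hqp := inner_sub_le_zero_of_mem_convexHull hvq hp
  have norm_sq_eq : ‖p - q‖ ^ 2 = ⟪v - p, q - p⟫ + ⟪v - q, p - q⟫ := by
    rw [← real_inner_self_eq_norm_sq, ← neg_sub p q, inner_neg_right, neg_add_eq_sub,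
      ← inner_sub_left, sub_sub_sub_cancel_left]
  rw [← sub_eq_zero, ← norm_eq_zero]
  exact pow_eq_zero_iff two_ne_zero |>.1 (le_antisymm (by linarith) (sq_nonneg _))

lemma card_le_finrank_of_affineIndependent_of_inner_eq_zero [FiniteDimensional ℝ E] {κ : Type*}
    [Fintype κ] {y : κ → E} (hy : AffineIndependent ℝ y) (hw : w ≠ 0)
    (h : ∀ i, ⟪w, y i - p⟫ = 0) : Fintype.card κ ≤ finrank ℝ E := by
  rcases isEmpty_or_nonempty κ with _ | _
  · simp
  have vectorSpan_le : vectorSpan ℝ (range y) ≤ (ℝ ∙ w)ᗮ := by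
    refine Submodule.span_le.2 ?_
    rintro _ ⟨_, ⟨i, rfl⟩, _, ⟨j, rfl⟩, rfl⟩
    simp only [SetLike.mem_coe, Submodule.mem_orthogonal_singleton_iff_inner_right, vsub_eq_sub]
    rw [← sub_sub_sub_cancel_right _ _ p, inner_sub_right, h, h, sub_zero]
  calc Fintype.card κ = finrank ℝ (vectorSpan ℝ (range y)) + 1 :=
        hy.finrank_vectorSpan_add_one.symm
    _ ≤ finrank ℝ (ℝ ∙ w)ᗮ + finrank ℝ (ℝ ∙ w) := by
        rw [finrank_span_singleton hw]
        gcongr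
        exact Submodule.finrank_mono vectorSpan_le
    _ = finrank ℝ E := by rw [add_comm, Submodule.finrank_add_finrank_orthogonal]

/- Carathéodory's theorem saves one point when `p` lies in a supporting hyperplane of `s`: all
points with positive weight lie in this hyperplane. -/
lemma exists_finset_card_le_finrank_of_inner_le_zero [FiniteDimensional ℝ E] (hw : w ≠ 0)
    (hp : p ∈ convexHull ℝ s) (h : ∀ x ∈ s, ⟪w, x - p⟫ ≤ 0) :
    ∃ t : Finset E, ↑t ⊆ s ∧ #t ≤ finrank ℝ E ∧ p ∈ convexHull ℝ (t : Set E) := by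
  obtain ⟨κ, _, y, a, hys, hy, ha, ha_sum, hay⟩ := eq_pos_convex_span_of_mem_convexHull hp
  have inner_le (i) : a i * ⟪w, y i - p⟫ ≤ 0 :=
    mul_nonpos_of_nonneg_of_nonpos (ha i).le (h _ (hys (mem_range_self i)))
  have sum_inner_eq : ∑ i, a i * ⟪w, y i - p⟫ = 0 := by
    simp only [inner_sub_right, mul_sub, ← inner_smul_right, Finset.sum_sub_distrib, ← inner_sum,
      ← Finset.sum_smul, hay, ha_sum, one_smul, sub_self]
  have inner_eq (i) : ⟪w, y i - p⟫ = 0 :=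
    (mul_eq_zero.1 ((Finset.sum_eq_zero_iff_of_nonpos fun i _ => inner_le i).1 sum_inner_eq i
      (Finset.mem_univ i))).resolve_left (ha i).ne'
  refine ⟨Finset.univ.image y, by simpa using hys, ?_, ?_⟩
  · exact Finset.card_image_le.trans
      (card_le_finrank_of_affineIndependent_of_inner_eq_zero hy hw inner_eq)
  · rw [← hay]
    exact (convex_convexHull ℝ _).sum_mem (fun i _ => (ha i).le) ha_sum
      fun i _ => subset_convexHull ℝ _ (by simp)

/-- The predicate that the points `z j`, `j ∈ J`, span a face of the convex hull of the points
`z i` that contains the point `p` of this hull nearest to `v`, where `p ≠ v`. The point `p` is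
characterised by the variational inequality. -/
def IsNearestFace {ι : Type*} (v : E) (J : Finset ι) (z : ι → E) : Prop :=
  v ∉ convexHull ℝ (z '' J) ∧ ∃ p ∈ convexHull ℝ (z '' J), ∀ i, ⟪v - p, z i - p⟫ ≤ 0

lemma exists_isNearestFace [FiniteDimensional ℝ E] {ι : Type*} [Finite ι] [Nonempty ι]
    {z : ι → E} (hv : v ∉ convexHull ℝ (range z)) :
    ∃ J : Finset ι, #J ≤ finrank ℝ E ∧ IsNearestFace v J z := by
  obtain ⟨p, hp, p_nearest⟩ := exists_norm_eq_iInf_of_complete_convex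
    (range_nonempty z).convexHull ((finite_range z).isCompact_convexHull ℝ).isComplete
    (convex_convexHull ℝ _) v
  rw [norm_eq_iInf_iff_real_inner_le_zero (convex_convexHull ℝ _) hp] at p_nearest
  have inner_le (x) (hx : x ∈ range z) : ⟪v - p, x - p⟫ ≤ 0 :=
    p_nearest x (subset_convexHull ℝ _ hx)
  have hvp : v - p ≠ 0 := sub_ne_zero.2 fun h => hv (h ▸ hp)
  obtain ⟨t, ht, ht_card, hpt⟩ :=
    exists_finset_card_le_finrank_of_inner_le_zero hvp hp inner_le
  obtain ⟨J, -, z_inj, rfl⟩ :=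
    Finset.exists_subset_injOn_image_eq_of_surjOn univ t fun x hx => image_univ ▸ ht hx
  rw [Finset.card_image_of_injOn z_inj] at ht_card
  rw [Finset.coe_image] at hpt
  exact ⟨J, ht_card, fun h => hv (convexHull_mono (image_subset_range _ _) h), p, hpt,
    fun i => inner_le _ (mem_range_self i)⟩

end ConvexHull

section ClosedHullConditions

variable {E : Type*} [AddCommGroup E] [Module ℝ E] {ι : Type*}

lemma convexHull_range_eq_image_stdSimplex [Fintype ι] (z : ι → E) :
    convexHull ℝ (range z) = (fun a : ι → ℝ => ∑ i, a i • z i) '' stdSimplex ℝ ι := by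
  rw [← convexHull_rangle_single_eq_stdSimplex]
  change _ = Fintype.linearCombination ℝ z '' _
  rw [LinearMap.image_convexHull, ← range_comp]
  congr 2
  ext i
  simp [Fintype.linearCombination_apply_single]

lemma isClosed_setOf_exists_mem_convexHull_image [TopologicalSpace E] [ContinuousAdd E]
    [ContinuousSMul ℝ E] {C : Set ((ι → E) × E)} (hC : IsClosed C) (J : Finset ι) :
    IsClosed {z : ι → E | ∃ p ∈ convexHull ℝ (z '' J), (z, p) ∈ C} := by
  let combination : stdSimplex ℝ J × (ι → E) → (ι → E) × E :=
    fun x => (x.2, ∑ j : J, x.1.val j • x.2 j)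
  have continuous_combination : Continuous combination :=
    continuous_snd.prodMk (continuous_finsetSum _ fun j _ =>
      ((continuous_apply j).comp (continuous_subtype_val.comp continuous_fst)).smul (by fun_prop))
  convert isClosedMap_snd_of_compactSpace _ (hC.preimage continuous_combination) using 1
  ext z
  rw [mem_ofPred_eq, image_eq_range, convexHull_range_eq_image_stdSimplex]
  constructor
  · rintro ⟨_, ⟨a, ha, rfl⟩, hzC⟩
    exact ⟨(⟨a, ha⟩, z), hzC, rfl⟩
  · rintro ⟨⟨a, z⟩, hzC, rfl⟩
    exact ⟨_, ⟨a, a.2, rfl⟩, hzC⟩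

end ClosedHullConditions

section Probability

variable {E : Type*} [NormedAddCommGroup E] [InnerProductSpace ℝ E] {ι : Type*}

lemma IsNearestFace.exists_forall_inner_le {v : E} {J : Finset ι} {z₀ : ι → E}
    (h₀ : IsNearestFace v J z₀) :
    ∃ w ≠ 0, ∀ z : ι → E, z '' J = z₀ '' J → IsNearestFace v J z →
      ∀ i, ⟪w, z i⟫ ≤ ⟪w, v⟫ := by
  obtain ⟨hv, p, hp, inner_le⟩ := h₀
  refine ⟨v - p, sub_ne_zero.2 fun h => hv (h ▸ hp), fun z hz ⟨_, p', hp', inner_le'⟩ i => ?_⟩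
  obtain rfl : p' = p :=
    eq_of_inner_le_zero_of_mem_convexHull hp' (hz ▸ hp) (forall_mem_image.2 fun j _ => inner_le' j)
      (hz ▸ forall_mem_image.2 fun j _ => inner_le j)
  calc ⟪v - p', z i⟫ ≤ ⟪v - p', p'⟫ := by
        rw [← sub_nonpos, ← inner_sub_right]
        exact inner_le' i
    _ ≤ ⟪v - p', v⟫ := by
        rw [← sub_nonneg, ← inner_sub_right]
        exact real_inner_self_nonneg

variable [MeasurableSpace E] [BorelSpace E] [SecondCountableTopology E]

lemma measurableSet_isNearestFace [Finite ι] (v : E) (J : Finset ι) :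
    MeasurableSet {z : ι → E | IsNearestFace v J z} := by
  have isClosed_hull : IsClosed {z : ι → E | v ∈ convexHull ℝ (z '' J)} := by
    simpa using isClosed_setOf_exists_mem_convexHull_image
      (isClosed_eq continuous_snd continuous_const : IsClosed {x : (ι → E) × E | x.2 = v}) J
  have isClosed_nearest :
      IsClosed {z : ι → E | ∃ p ∈ convexHull ℝ (z '' J), ∀ i, ⟪v - p, z i - p⟫ ≤ 0} := by
    refine isClosed_setOf_exists_mem_convexHull_image
      (C := {x | ∀ i, ⟪v - x.2, x.1 i - x.2⟫ ≤ 0}) ?_ J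
    simp only [ofPred_forall]
    exact isClosed_iInter fun i => isClosed_le (by fun_prop) continuous_const
  exact isClosed_hull.measurableSet.compl.inter isClosed_nearest.measurableSet

variable {ν : Measure E} [IsProbabilityMeasure ν] [Fintype ι] {v : E} {q : ℝ≥0∞}

/- The points `z j` with `j ∈ J` determine the nearest point `p`, so the remaining independent
points must fall into the fixed half-space `{x | ⟪v - p, x⟫ ≤ ⟪v - p, v⟫}`. -/
lemma measure_pi_isNearestFace_le (hq : ∀ w ≠ 0, ν {x | ⟪w, x⟫ ≤ ⟪w, v⟫} ≤ q) (J : Finset ι) :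
    (Measure.pi fun _ : ι => ν) {z | IsNearestFace v J z} ≤ q ^ (Fintype.card ι - #J) := by
  have preserving := (measurePreserving_piEquivPiSubtypeProd (fun _ : ι => ν) (· ∈ J)).symm
  set glue := (MeasurableEquiv.piEquivPiSubtypeProd (fun _ : ι => E) (· ∈ J)).symm
  have glue_image (y y₁ y₂) : glue (y, y₁) '' J = glue (y, y₂) '' J :=
    image_congr fun i (hi : i ∈ J) => by simp [glue, MeasurableEquiv.piEquivPiSubtypeProd, hi]
  have section_le (y) : (Measure.pi fun _ : {i // i ∉ J} => ν)
      {y' | IsNearestFace v J (glue (y, y'))} ≤ q ^ (Fintype.card ι - #J) := by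
    rcases eq_empty_or_nonempty {y' | IsNearestFace v J (glue (y, y'))} with h | ⟨y₀, h⟩
    · simp [h]
    obtain ⟨w, hw, inner_le⟩ := IsNearestFace.exists_forall_inner_le h
    calc (Measure.pi fun _ : {i // i ∉ J} => ν) {y' | IsNearestFace v J (glue (y, y'))}
        ≤ (Measure.pi fun _ : {i // i ∉ J} => ν) (univ.pi fun _ => {x | ⟪w, x⟫ ≤ ⟪w, v⟫}) := by
          refine measure_mono fun y' hy' i _ => ?_
          simpa [glue, MeasurableEquiv.piEquivPiSubtypeProd, i.2] using
            inner_le _ (glue_image y y' y₀) hy' i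
      _ = ν {x | ⟪w, x⟫ ≤ ⟪w, v⟫} ^ (Fintype.card ι - #J) := by
          simp [Measure.pi_pi, Fintype.card_subtype_compl]
      _ ≤ q ^ (Fintype.card ι - #J) := by gcongr; exact hq w hw
  rw [← preserving.measure_preimage (measurableSet_isNearestFace v J).nullMeasurableSet,
    Measure.prod_apply (glue.measurable (measurableSet_isNearestFace v J))]
  exact (lintegral_mono section_le).trans_eq (by simp)

lemma measure_pi_notMem_convexHull_range_le [FiniteDimensional ℝ E] [Nonempty ι]
    (hq : ∀ w ≠ 0, ν {x | ⟪w, x⟫ ≤ ⟪w, v⟫} ≤ q) :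
    (Measure.pi fun _ : ι => ν) {z | v ∉ convexHull ℝ (range z)} ≤
      ∑ J : Finset ι with #J ≤ finrank ℝ E, q ^ (Fintype.card ι - #J) := by
  calc (Measure.pi fun _ : ι => ν) {z | v ∉ convexHull ℝ (range z)}
      ≤ (Measure.pi fun _ : ι => ν)
          (⋃ J ∈ ({J | #J ≤ finrank ℝ E} : Finset (Finset ι)), {z | IsNearestFace v J z}) := by
        refine measure_mono fun z hz => ?_
        simpa using exists_isNearestFace hz
    _ ≤ _ := (measure_biUnion_finset_le _ _).trans
        (Finset.sum_le_sum fun J _ => measure_pi_isNearestFace_le hq J)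

end Probability

section Marginal

variable {X ι κ : Type*} [MeasurableSpace X] {ν : Measure X} [IsProbabilityMeasure ν]
  [Fintype ι] [Fintype κ]

lemma measurePreserving_comp_of_injective {e : κ → ι} (he : Function.Injective e) :
    MeasurePreserving (fun z : ι → X => z ∘ e) (Measure.pi fun _ => ν)
      (Measure.pi fun _ => ν) := by
  refine ⟨by fun_prop, ?_⟩
  have indep : ProbabilityTheory.iIndepFun (fun i (z : ι → X) => z i) (Measure.pi fun _ => ν) :=
    ProbabilityTheory.iIndepFun_pi (X := fun _ => id) fun _ => aemeasurable_id
  have := (ProbabilityTheory.iIndepFun_iff_map_fun_eq_pi_map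
    fun _ => (measurable_pi_apply _).aemeasurable).1 (indep.precomp he)
  simpa [(measurePreserving_eval (fun _ : ι => ν) _).map_eq, Function.comp_def] using this

end Marginal

section Complement

lemma ofReal_one_sub_le_measure_of_measure_compl_le {Ω : Type*} [MeasurableSpace Ω]
    {μ : Measure Ω} [IsProbabilityMeasure μ] {s : Set Ω} {ε : ℝ} (hε : 0 ≤ ε)
    (h : μ sᶜ ≤ ENNReal.ofReal ε) : ENNReal.ofReal (1 - ε) ≤ μ s := by
  rw [ENNReal.ofReal_sub _ hε, ENNReal.ofReal_one, tsub_le_iff_right]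
  calc 1 = μ univ := measure_univ.symm
    _ ≤ μ s + μ sᶜ := measure_univ_le_add_compl s
    _ ≤ μ s + ENNReal.ofReal ε := by gcongr

end Complement

section Numerics

lemma sum_card_le_pow_le {ι : Type*} [Fintype ι] (d : ℕ) {q y : ℝ} (hq : 0 ≤ q) (hy : 1 ≤ y) :
    ∑ J : Finset ι with #J ≤ d, q ^ (Fintype.card ι - #J) ≤
      y ^ d * (y⁻¹ + q) ^ Fintype.card ι := by
  have : 0 < y := one_pos.trans_le hy
  rw [← Fintype.sum_pow_mul_eq_add_pow ι y⁻¹ q, Finset.mul_sum]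
  refine (Finset.sum_le_sum fun J hJ => ?_).trans
    (Finset.sum_le_univ_sum_of_nonneg fun J => by positivity)
  have one_le : 1 ≤ y ^ d * y⁻¹ ^ #J := by
    rw [inv_pow, ← div_eq_mul_inv, one_le_div (by positivity)]
    exact pow_le_pow_right₀ hy (by simpa using hJ)
  rw [← mul_assoc]
  exact le_mul_of_one_le_left (by positivity) one_le

lemma twelve_pow_mul_le_exp {d N : ℕ} (hN : 16 * d ≤ N) :
    (12 : ℝ) ^ d * (12⁻¹ + 3 / 4) ^ N ≤ Real.exp (-(d : ℝ) / 6) :=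
  calc (12 : ℝ) ^ d * (12⁻¹ + 3 / 4) ^ N
      ≤ 12 ^ d * (12⁻¹ + 3 / 4) ^ (16 * d) := by
        gcongr 12 ^ d * ?_
        exact pow_le_pow_of_le_one (by norm_num) (by norm_num) hN
    _ = (12 * (5 / 6) ^ 16) ^ d := by rw [pow_mul, ← mul_pow]; norm_num
    _ ≤ Real.exp (-1 / 6) ^ d := by
        gcongr
        exact le_trans (by norm_num) (Real.add_one_le_exp _)
    _ = Real.exp (-(d : ℝ) / 6) := by rw [← Real.exp_nat_mul]; congr 1; ring

lemma pi_rpow_three_halves_le : Real.pi ^ ((3 : ℝ) / 2) ≤ 8 :=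
  calc Real.pi ^ ((3 : ℝ) / 2) ≤ 4 ^ ((3 : ℝ) / 2) :=
        Real.rpow_le_rpow Real.pi_pos.le Real.pi_le_four (by norm_num)
    _ = (2 ^ (2 : ℝ)) ^ ((3 : ℝ) / 2) := by norm_num
    _ = 8 := by rw [← Real.rpow_mul (by norm_num)]; norm_num

lemma seven_le_eight_mul_exp_one_sq_div : 7 ≤ 8 * Real.exp 1 ^ 2 / Real.pi ^ ((3 : ℝ) / 2) := by
  have seven_le_exp_one_sq : 7 ≤ Real.exp 1 ^ 2 := by nlinarith [Real.exp_one_gt_d9]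
  rw [le_div_iff₀ (by positivity)]
  linarith [pi_rpow_three_halves_le]

lemma radius_pos_and_sq_ge {d : ℕ} {γ r : ℝ} (hd : 0 < d) (hγ : 0 < γ)
    (hr : 8 * Real.exp 1 ^ 2 * √(2 * d) / Real.pi ^ ((3 : ℝ) / 2) * γ ≤ r) :
    0 < r ∧ 18 * d * (2 * γ) ^ 2 ≤ r ^ 2 := by
  have hr₇ : 7 * √(2 * d) * γ ≤ r := by
    refine le_trans ?_ hr
    rw [mul_div_right_comm]
    gcongr
    exact seven_le_eight_mul_exp_one_sq_div
  refine ⟨lt_of_lt_of_le (by positivity) hr₇, ?_⟩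
  calc 18 * d * (2 * γ) ^ 2 ≤ 49 * (2 * d) * γ ^ 2 := by
        linarith [show 0 ≤ d * γ ^ 2 by positivity]
    _ = (7 * √(2 * d) * γ) ^ 2 := by rw [mul_pow, mul_pow, Real.sq_sqrt (by positivity)]; norm_num
    _ ≤ r ^ 2 := by gcongr

end Numerics

section Augmentation

variable {d : ℕ}

lemma measure_pi_uniformSphere_notMem_convexHull_range_le {ι : Type*} [Fintype ι] {r : ℝ}
    {v : Euc d} (hd : 0 < d) (hι : 16 * d ≤ Fintype.card ι) (hr : 0 < r)
    (hv : 18 * d * ‖v‖ ^ 2 ≤ r ^ 2) :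
    (Measure.pi fun _ : ι => uniformSphere d r) {z | v ∉ convexHull ℝ (range z)} ≤
      ENNReal.ofReal (Real.exp (-(d : ℝ) / 6)) := by
  have := isProbabilityMeasure_uniformSphere hd r
  have : Nonempty ι := Fintype.card_pos_iff.1 (by lia)
  calc (Measure.pi fun _ : ι => uniformSphere d r) {z | v ∉ convexHull ℝ (range z)}
      ≤ ∑ J : Finset ι with #J ≤ d, ENNReal.ofReal (3 / 4) ^ (Fintype.card ι - #J) := by
        simpa only [finrank_euclideanSpace_fin] using measure_pi_notMem_convexHull_range_le
          fun w hw => uniformSphere_halfSpace_le hd hr hv hw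
    _ = ENNReal.ofReal (∑ J : Finset ι with #J ≤ d, (3 / 4) ^ (Fintype.card ι - #J)) := by
        rw [ENNReal.ofReal_sum_of_nonneg fun _ _ => by positivity]
        exact Finset.sum_congr rfl fun _ _ => (ENNReal.ofReal_pow (by norm_num) _).symm
    _ ≤ ENNReal.ofReal (Real.exp (-(d : ℝ) / 6)) := ENNReal.ofReal_le_ofReal <|
        (sum_card_le_pow_le d (by norm_num) (by norm_num)).trans (twelve_pow_mul_le_exp hι)

lemma respectfulSet_top_eq_empty {T : Set (Euc d × ℝ)} {x : Euc d}
    (hx_pos : x ∈ convexHull ℝ (posPts T)) (hx_neg : x ∈ convexHull ℝ (negPts T)) :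
    respectfulSet ⊤ T = ∅ := by
  refine eq_empty_of_forall_notMem fun f ⟨_, f_pos, f_neg⟩ => ?_
  linarith [f_pos _ Subset.rfl le_top x hx_pos, f_neg _ Subset.rfl le_top x hx_neg]

lemma respectfulSet_top_eq_empty_of_sub_mem_convexHull_range {ι : Type*} {T : Set (Euc d × ℝ)}
    {x₁ x₂ : Euc d} {z : ι → Euc d} (h_pos : ∀ i, (x₁ + z i, (1 : ℝ)) ∈ T)
    (h_neg : (x₂, (-1 : ℝ)) ∈ T) (h : x₂ - x₁ ∈ convexHull ℝ (range z)) :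
    respectfulSet ⊤ T = ∅ := by
  have vadd_range_subset : x₁ +ᵥ range z ⊆ posPts T := by
    rw [vadd_set_range]
    exact range_subset_iff.2 h_pos
  refine respectfulSet_top_eq_empty (convexHull_mono vadd_range_subset ?_)
    (subset_convexHull ℝ _ h_neg)
  rwa [convexHull_vadd, mem_vadd_set_iff_neg_vadd_mem, vadd_eq_add, neg_add_eq_sub]

end Augmentation

/-- Theorem 20 of the paper: for `S = {(x₁,1),(x₂,-1)}` with
`d(x₁,x₂) = 2γ*`, augmenting each point with `N ≥ 16d` uniform spherical perturbations
of radius `r ≥ (8e²√(2d)/π^{3/2})γ*` makes `R_∞(S ∪ S')` empty with probability at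
least `1 - 2e^{-d/6}`. -/
theorem respectful_set_empty_for_large_radius {d : ℕ} (hd : 0 < d)
    (x₁ x₂ : Euc d) (γstar : ℝ) (hγ : 0 < γstar) (hdist : dist x₁ x₂ = 2 * γstar)
    (N : ℕ) (hN : 16 * d ≤ N) (r : ℝ)
    (hr : 8 * Real.exp 1 ^ 2 * Real.sqrt (2 * d) / Real.pi ^ ((3 : ℝ) / 2) * γstar ≤ r)
    (S : Set (Euc d × ℝ)) (hSdef : S = {(x₁, (1 : ℝ)), (x₂, (-1 : ℝ))})
    (S' : (Fin 2 × Fin N → Euc d) → Set (Euc d × ℝ))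
    (hS'def : ∀ z, S' z = Set.range fun p : Fin 2 × Fin N =>
      (![x₁, x₂] p.1 + z p, ![(1 : ℝ), -1] p.1)) :
    ENNReal.ofReal (1 - 2 * Real.exp (-(d : ℝ) / 6)) ≤
      (Measure.pi fun _ : Fin 2 × Fin N => uniformSphere d r)
        {z | respectfulSet ⊤ (S ∪ S' z) = (∅ : Set (Euc d → ℝ))} := by
  have := isProbabilityMeasure_uniformSphere hd r
  obtain ⟨r_pos, sq_le⟩ := radius_pos_and_sq_ge hd hγ hr
  rw [← hdist, dist_comm, dist_eq_norm] at sq_le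
  set μ := Measure.pi fun _ : Fin 2 × Fin N => uniformSphere d r
  set emptyEvent := {z | respectfulSet ⊤ (S ∪ S' z) = (∅ : Set (Euc d → ℝ))}
  have compl_subset : emptyEventᶜ ⊆
      (fun z j => z (0, j)) ⁻¹' {y : Fin N → Euc d | x₂ - x₁ ∉ convexHull ℝ (range y)} :=
    fun z hz hmem => hz <| respectfulSet_top_eq_empty_of_sub_mem_convexHull_range
      (fun j => .inr <| hS'def z ▸ ⟨(0, j), by simp⟩) (.inl <| by simp [hSdef]) hmem
  refine ofReal_one_sub_le_measure_of_measure_compl_le (by positivity) ?_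
  calc μ emptyEventᶜ
      ≤ (Measure.pi fun _ : Fin N => uniformSphere d r)
          {y | x₂ - x₁ ∉ convexHull ℝ (range y)} :=
        (measure_mono compl_subset).trans <| (measurePreserving_comp_of_injective
          (Prod.mk_right_injective (0 : Fin 2))).measure_preimage_le _
    _ ≤ ENNReal.ofReal (Real.exp (-(d : ℝ) / 6)) :=
        measure_pi_uniformSphere_notMem_convexHull_range_le hd (by simpa using hN) r_pos sq_le
    _ ≤ ENNReal.ofReal (2 * Real.exp (-(d : ℝ) / 6)) :=
        ENNReal.ofReal_le_ofReal (by linarith [Real.exp_pos (-(d : ℝ) / 6)])
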